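/- arXiv:1804.01614 — 11 statements merged into one kernel-verified Lean document; each statement's English description precedes it below -/
import Mathlib

section
/- Let b_0, …, b_{m−1} be m real numbers (m ≥ 1) placed in a ring and n a real number. If b_0 + b_1 + … + b_{m−1} ≤ n, then for every length l with 1 ≤ l ≤ m there exists an index i ∈ {0, …, m−1} such that the chain sum ‖c_i^l‖ = Σ_{j=0}^{l−1} b_{(i+j) mod m} satisfies ‖c_i^l‖ ≤ l·n/m. -/
theorem ring_shift_sum (m : ℕ) (b : ℕ → ℝ) (j : ℕ) :
    ∑ i ∈ Finset.range m, b ((i + j) % m) = ∑ i ∈ Finset.range m, b i := by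
  induction j with
  | zero =>
    refine Finset.sum_congr rfl fun i hi => ?_
    rw [Nat.add_zero, Nat.mod_eq_of_lt (Finset.mem_range.mp hi)]
  | succ j ih =>
    rw [← ih]
    have h1 := Finset.sum_range_succ (fun i => b ((i + j) % m)) m
    have h2 := Finset.sum_range_succ' (fun i => b ((i + j) % m)) m
    have h3 : ∑ i ∈ Finset.range m, b ((i + (j + 1)) % m)
        = ∑ i ∈ Finset.range m, b ((i + 1 + j) % m) :=
      Finset.sum_congr rfl fun i _ => by rw [show i + (j + 1) = i + 1 + j by omega]
    simp only [Nat.add_mod_left, Nat.zero_add] at h1 h2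
    linarith

/-- Pigeonring principle (basic form): if the sum of `m` real numbers placed in a ring is at
most `n`, then for every length `l ∈ [1, m]` there are `l` consecutive boxes whose sum is at
most `l * n / m`. -/
theorem pigeonring_basic (m : ℕ) (hm : 1 ≤ m) (b : ℕ → ℝ) (n : ℝ)
    (h : ∑ i ∈ Finset.range m, b i ≤ n) :
    ∀ l, 1 ≤ l → l ≤ m →
      ∃ i < m, ∑ j ∈ Finset.range l, b ((i + j) % m) ≤ (l : ℝ) * n / m := by
  intro l _ _
  have hm0 : (m : ℝ) ≠ 0 := by positivity
  have key : ∑ i ∈ Finset.range m, ∑ j ∈ Finset.range l, b ((i + j) % m)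
      ≤ ∑ _i ∈ Finset.range m, (l : ℝ) * n / m := by
    rw [Finset.sum_comm, Finset.sum_congr rfl fun j _ => ring_shift_sum m b j]
    simp only [Finset.sum_const, Finset.card_range, nsmul_eq_mul]
    rw [mul_div_cancel₀ _ hm0]
    gcongr
  obtain ⟨i, hi, hle⟩ := Finset.exists_le_of_sum_le
    (Finset.nonempty_range_iff.mpr (by omega)) key
  exact ⟨i, Finset.mem_range.mp hi, hle⟩
end

section
/- Let b_0, …, b_{m−1} be m real numbers (m ≥ 1) placed in a ring and n a real number. If b_0 + b_1 + … + b_{m−1} ≤ n, then there exists an index i ∈ {0, …, m−1} such that for every l with 1 ≤ l ≤ m, the chain sum ‖c_i^l‖ = Σ_{j=0}^{l−1} b_{(i+j) mod m} satisfies ‖c_i^l‖ ≤ l·n/m; i.e., the chain c_i^m starting at b_i is prefix-viable. -/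
/-- Pigeonring principle (strong form): if the sum of `m` real numbers placed in a ring is at
most `n`, then there exists a starting index `i` such that for every length `l ∈ [1, m]`, the
chain of `l` consecutive boxes starting at `i` has sum at most `l * n / m`. -/
theorem pigeonring_strong (m : ℕ) (hm : 1 ≤ m) (b : ℕ → ℝ) (n : ℝ)
    (h : ∑ i ∈ Finset.range m, b i ≤ n) :
    ∃ i < m, ∀ l, 1 ≤ l → l ≤ m →
      ∑ j ∈ Finset.range l, b ((i + j) % m) ≤ (l : ℝ) * n / m := by
  have hm0 : (m : ℝ) ≠ 0 := by positivity
  obtain ⟨S, hS⟩ : ∃ S : ℕ → ℝ, ∀ k, S k = ∑ j ∈ Finset.range k, b (j % m) - (k : ℝ) * n / m :=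
    ⟨_, fun _ => rfl⟩
  have hper : ∀ k, S (m + k) ≤ S k := by
    intro k
    have h1 : ∑ j ∈ Finset.range m, b (j % m) = ∑ j ∈ Finset.range m, b j :=
      Finset.sum_congr rfl fun j hj => by rw [Nat.mod_eq_of_lt (Finset.mem_range.mp hj)]
    have h2 : ((m + k : ℕ) : ℝ) * n / m = n + k * n / m := by
      push_cast
      field_simp
    rw [hS, hS, Finset.sum_range_add, h1, h2]
    simp only [Nat.add_mod_left]
    linarith
  obtain ⟨i, hi, hmax⟩ := Finset.exists_max_image (Finset.range m) S
    ⟨0, Finset.mem_range.mpr hm⟩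
  rw [Finset.mem_range] at hi
  refine ⟨i, hi, fun l _ hl => ?_⟩
  have key : S (i + l) ≤ S i := by
    by_cases hlt : i + l < m
    · exact hmax _ (Finset.mem_range.mpr hlt)
    · obtain ⟨k, hk⟩ := Nat.exists_eq_add_of_le (not_lt.mp hlt)
      rw [hk]
      exact (hper k).trans (hmax k (Finset.mem_range.mpr (by omega)))
  have h3 : ((i + l : ℕ) : ℝ) * n / m = i * n / m + l * n / m := by
    push_cast
    ring
  rw [hS, hS, Finset.sum_range_add, h3] at key
  linarith
end

section
/- Let B = (b_0, …, b_{m−1}) and T = (t_0, …, t_{m−1}) be two sequences of m real numbers (m ≥ 1) placed in a ring, and n a real number. If b_0 + … + b_{m−1} ≤ n and t_0 + … + t_{m−1} = n, then for every l with 1 ≤ l ≤ m there exists an index i ∈ {0, …, m−1} such that for every l' with 1 ≤ l' ≤ l, the prefix chain sum satisfies Σ_{j=0}^{l'−1} b_{(i+j) mod m} ≤ Σ_{j=0}^{l'−1} t_{(i+j) mod m}. -/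
/-- Pigeonring principle with variable threshold allocation: if `∑ B ≤ n` and `∑ T = n`, then
for every `l ∈ [1, m]` there is a chain of length `l` all of whose prefixes satisfy the
variable-threshold bound. -/
theorem pigeonring_variable_threshold (m : ℕ) (hm : 1 ≤ m) (b t : ℕ → ℝ) (n : ℝ)
    (hb : ∑ i ∈ Finset.range m, b i ≤ n)
    (ht : ∑ i ∈ Finset.range m, t i = n) :
    ∀ l, 1 ≤ l → l ≤ m →
      ∃ i < m, ∀ l', 1 ≤ l' → l' ≤ l →
        ∑ j ∈ Finset.range l', b ((i + j) % m) ≤ ∑ j ∈ Finset.range l', t ((i + j) % m) := by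
  intro l _ hlm
  set f : ℕ → ℝ := fun j => b (j % m) - t (j % m) with hf
  obtain ⟨i, hi, hmax⟩ := Finset.exists_max_image (Finset.range m)
    (fun k => ∑ j ∈ Finset.range k, f j) ⟨0, Finset.mem_range.2 hm⟩
  have him := Finset.mem_range.1 hi
  have hS : ∑ j ∈ Finset.range m, f j ≤ 0 := by
    have h : ∑ j ∈ Finset.range m, f j = ∑ j ∈ Finset.range m, (b j - t j) := by
      refine Finset.sum_congr rfl fun j hj => ?_
      simp only [hf, Nat.mod_eq_of_lt (Finset.mem_range.1 hj)]
    rw [h, Finset.sum_sub_distrib]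
    linarith
  refine ⟨i, him, fun l' _ hl' => ?_⟩
  have key : ∑ j ∈ Finset.range (i + l'), f j ≤ ∑ j ∈ Finset.range i, f j := by
    by_cases h : i + l' < m
    · exact hmax _ (Finset.mem_range.2 h)
    · obtain ⟨k, hk⟩ := Nat.exists_eq_add_of_le (not_lt.1 h)
      have h1 := hmax k (Finset.mem_range.2 (by omega))
      have h2 : ∑ j ∈ Finset.range k, f (m + j) = ∑ j ∈ Finset.range k, f j := by
        refine Finset.sum_congr rfl fun j _ => ?_
        simp only [hf, Nat.add_mod_left]
      rw [hk, Finset.sum_range_add, h2]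
      linarith
  rw [Finset.sum_range_add] at key
  simp only [hf, Finset.sum_sub_distrib] at key
  linarith
end

section
/- Let B = (b_0, …, b_{m−1}) and T = (t_0, …, t_{m−1}) be two sequences of m real numbers (m ≥ 1) placed in a ring, and n a real number. If b_0 + … + b_{m−1} ≥ n and t_0 + … + t_{m−1} = n, then for every l with 1 ≤ l ≤ m there exists an index i ∈ {0, …, m−1} such that for every l' with 1 ≤ l' ≤ l, the prefix chain sum satisfies Σ_{j=0}^{l'−1} b_{(i+j) mod m} ≥ Σ_{j=0}^{l'−1} t_{(i+j) mod m}. -/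
/-- Pigeonring principle with variable threshold allocation ('≥' version): if `∑ B ≥ n` and
`∑ T = n`, then for every `l ∈ [1, m]` there is a chain of length `l` all of whose prefixes
satisfy the variable-threshold lower bound. -/
theorem pigeonring_variable_threshold_ge (m : ℕ) (hm : 1 ≤ m) (b t : ℕ → ℝ) (n : ℝ)
    (hb : n ≤ ∑ i ∈ Finset.range m, b i)
    (ht : ∑ i ∈ Finset.range m, t i = n) :
    ∀ l, 1 ≤ l → l ≤ m →
      ∃ i < m, ∀ l', 1 ≤ l' → l' ≤ l →
        ∑ j ∈ Finset.range l', t ((i + j) % m) ≤ ∑ j ∈ Finset.range l', b ((i + j) % m) := by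
  intro l _ hl
  obtain ⟨i, hi, hmin⟩ := Finset.exists_min_image (Finset.range m)
    (fun k => ∑ j ∈ Finset.range k, (b (j % m) - t (j % m))) ⟨0, by simp; omega⟩
  rw [Finset.mem_range] at hi
  refine ⟨i, hi, fun l' _ hl' => ?_⟩
  rw [← sub_nonneg, ← Finset.sum_sub_distrib]
  have h1 := Finset.sum_range_add (fun j => b (j % m) - t (j % m)) i l'
  have h2 : ∑ j ∈ Finset.range i, (b (j % m) - t (j % m))
      ≤ ∑ j ∈ Finset.range (i + l'), (b (j % m) - t (j % m)) := by
    by_cases hk : i + l' < m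
    · exact hmin _ (Finset.mem_range.2 hk)
    · obtain ⟨k, hk'⟩ := Nat.exists_eq_add_of_le (not_lt.1 hk)
      have h3 := hmin k (Finset.mem_range.2 (by omega))
      rw [hk', Finset.sum_range_add]
      have h4 : ∑ j ∈ Finset.range m, (b (j % m) - t (j % m))
          = ∑ j ∈ Finset.range m, (b j - t j) := by
        refine Finset.sum_congr rfl fun j hj => ?_
        rw [Nat.mod_eq_of_lt (Finset.mem_range.1 hj)]
      rw [Finset.sum_sub_distrib (s := Finset.range m) b t] at h4
      rw [h4]
      simp only [Nat.add_mod_left]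
      linarith
  linarith
end

section
/- Let B = (b_0, …, b_{m−1}) and T = (t_0, …, t_{m−1}) be two sequences of m integers (m ≥ 1) placed in a ring, and n an integer. If b_0 + … + b_{m−1} ≤ n and t_0 + … + t_{m−1} = n − m + 1, then for every l with 1 ≤ l ≤ m there exists an index i ∈ {0, …, m−1} such that for every l' with 1 ≤ l' ≤ l, the prefix chain sum satisfies Σ_{j=0}^{l'−1} b_{(i+j) mod m} ≤ (l' − 1) + Σ_{j=0}^{l'−1} t_{(i+j) mod m}. -/
/-- Pigeonring principle with integer reduction: if `∑ B ≤ n` and `∑ T = n - m + 1` for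
integer sequences, then for every `l ∈ [1, m]` there is a chain of length `l` each of whose
prefixes `c_i^{l'}` satisfies `‖c_i^{l'}‖ ≤ (l' - 1) + ∑ t`. -/
theorem pigeonring_integer_reduction (m : ℕ) (hm : 1 ≤ m) (b t : ℕ → ℤ) (n : ℤ)
    (hb : ∑ i ∈ Finset.range m, b i ≤ n)
    (ht : ∑ i ∈ Finset.range m, t i = n - m + 1) :
    ∀ l, 1 ≤ l → l ≤ m →
      ∃ i < m, ∀ l', 1 ≤ l' → l' ≤ l →
        ∑ j ∈ Finset.range l', b ((i + j) % m) ≤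
          ((l' : ℤ) - 1) + ∑ j ∈ Finset.range l', t ((i + j) % m) := by
  intro l _ hlm
  set P : ℕ → ℤ := fun k => ∑ j ∈ Finset.range k, (b (j % m) - t (j % m) - 1) with hP
  have hper : ∀ k, P (m + k) = P m + P k := by
    intro k
    simp only [hP]
    rw [Finset.sum_range_add]
    simp
  have hPm : P m < 0 := by
    have h : P m = ∑ j ∈ Finset.range m, (b j - t j - 1) := by
      apply Finset.sum_congr rfl
      intro j hj
      rw [Nat.mod_eq_of_lt (Finset.mem_range.mp hj)]
    rw [h, Finset.sum_sub_distrib, Finset.sum_sub_distrib]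
    simp
    linarith
  obtain ⟨i, hi, hmax⟩ := Finset.exists_max_image (Finset.range m)
    (fun k => (m : ℤ) * P k + k) ⟨0, Finset.mem_range.mpr hm⟩
  rw [Finset.mem_range] at hi
  have hle : ∀ k < m, P k ≤ P i := by
    intro k hk
    have h := hmax k (Finset.mem_range.mpr hk)
    by_contra hc
    have hi' : (i : ℤ) < m := by exact_mod_cast hi
    nlinarith
  have hlt : ∀ k < m, i < k → P k < P i := by
    intro k hk hik
    have h := hmax k (Finset.mem_range.mpr hk)
    by_contra hc
    have hi' : (i : ℤ) < k := by exact_mod_cast hik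
    nlinarith
  refine ⟨i, hi, fun l' h1 h2 => ?_⟩
  have key : P (i + l') < P i := by
    by_cases hc : i + l' < m
    · exact hlt _ hc (by omega)
    · obtain ⟨r, hr⟩ := Nat.exists_eq_add_of_le (not_lt.mp hc)
      rw [hr, hper]
      have := hle r (by omega)
      linarith
  have hsplit : P (i + l') = P i + ∑ j ∈ Finset.range l', (b ((i + j) % m) - t ((i + j) % m) - 1) := by
    simp only [hP]
    rw [Finset.sum_range_add]
  rw [Finset.sum_sub_distrib, Finset.sum_sub_distrib] at hsplit
  simp only [Finset.sum_const, Finset.card_range, nsmul_eq_mul, mul_one] at hsplit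
  linarith [Int.add_one_le_of_lt key]
end

section
/- Let B = (b_0, …, b_{m−1}) and T = (t_0, …, t_{m−1}) be two sequences of m integers (m ≥ 1) placed in a ring, and n an integer. If b_0 + … + b_{m−1} ≥ n and t_0 + … + t_{m−1} = n + m − 1, then for every l with 1 ≤ l ≤ m there exists an index i ∈ {0, …, m−1} such that for every l' with 1 ≤ l' ≤ l, the prefix chain sum satisfies Σ_{j=0}^{l'−1} b_{(i+j) mod m} ≥ (1 − l') + Σ_{j=0}^{l'−1} t_{(i+j) mod m}. -/
/-- Pigeonring principle with integer reduction ('≥' version): if `∑ B ≥ n` and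
`∑ T = n + m - 1` for integer sequences, then for every `l ∈ [1, m]` there is a chain of
length `l` each of whose prefixes `c_i^{l'}` satisfies `‖c_i^{l'}‖ ≥ (1 - l') + ∑ t`. -/
theorem pigeonring_integer_reduction_ge (m : ℕ) (hm : 1 ≤ m) (b t : ℕ → ℤ) (n : ℤ)
    (hb : n ≤ ∑ i ∈ Finset.range m, b i)
    (ht : ∑ i ∈ Finset.range m, t i = n + m - 1) :
    ∀ l, 1 ≤ l → l ≤ m →
      ∃ i < m, ∀ l', 1 ≤ l' → l' ≤ l →
        (1 - (l' : ℤ)) + ∑ j ∈ Finset.range l', t ((i + j) % m) ≤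
          ∑ j ∈ Finset.range l', b ((i + j) % m) := by
  intro l _ hlm
  set D : ℕ → ℤ := fun k => b (k % m) - t (k % m) + 1 with hD
  set S : ℕ → ℤ := fun k => ∑ j ∈ Finset.range k, D j with hS
  have hSm : 1 ≤ S m := by
    have h1 : S m = ∑ j ∈ Finset.range m, (b j - t j + 1) := by
      apply Finset.sum_congr rfl
      intro j hj
      simp only [hD, Nat.mod_eq_of_lt (Finset.mem_range.1 hj)]
    rw [h1, Finset.sum_add_distrib, Finset.sum_sub_distrib]
    simp
    linarith
  have hadd : ∀ i k, S (i + k) = S i + ∑ j ∈ Finset.range k, D (i + j) := by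
    intro i k
    exact Finset.sum_range_add D i k
  have hper : ∀ k, S (m + k) = S m + S k := by
    intro k
    rw [hadd]
    simp [hS, hD]
  obtain ⟨i, hi, hmin⟩ := Finset.exists_min_image (Finset.range m)
    (fun i => toLex (S i, -(i : ℤ))) ⟨0, Finset.mem_range.2 hm⟩
  rw [Finset.mem_range] at hi
  refine ⟨i, hi, fun k hk hkl => ?_⟩
  have key : 1 ≤ ∑ j ∈ Finset.range k, D (i + j) := by
    have h := hadd i k
    by_cases hc : i + k < m
    · have h2 := hmin (i + k) (Finset.mem_range.2 hc)
      simp only [Prod.Lex.toLex_le_toLex] at h2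
      push_cast at h2
      omega
    · obtain ⟨r, hr⟩ := Nat.exists_eq_add_of_le (not_lt.1 hc)
      have h2 := hmin r (Finset.mem_range.2 (by omega))
      simp only [Prod.Lex.toLex_le_toLex] at h2
      have h3 := hper r
      rw [← hr] at h3
      omega
  simp only [hD, Finset.sum_add_distrib, Finset.sum_sub_distrib] at key
  simp at key
  linarith
end

section
/- Let m ≥ 1, let u_0 ≤ v_0, …, u_{m−1} ≤ v_{m−1} be real numbers with Σ_{i=0}^{m−1} u_i ≤ n ≤ Σ_{i=0}^{m−1} v_i for a real number n, and let T = (t_0, …, t_{m−1}) be real numbers with t_0 + … + t_{m−1} < n. Then there exists a sequence B = (b_0, …, b_{m−1}) with u_i ≤ b_i ≤ v_i for every i and b_0 + … + b_{m−1} ≤ n, such that for every index i ∈ {0, …, m−1} there exists l' with 1 ≤ l' ≤ m for which Σ_{j=0}^{l'−1} b_{(i+j) mod m} > Σ_{j=0}^{l'−1} t_{(i+j) mod m}. In particular, no threshold sequence T with Σ T < n can guarantee, for all B in the given box ranges with Σ B ≤ n, the existence at every chain length l ∈ {1, …, m} of a chain all of whose prefixes satisfy the variable-threshold bound. -/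
theorem ring_rotate_sum (m : ℕ) (f : ℕ → ℝ) (i : ℕ) :
    ∑ j ∈ Finset.range m, f ((i + j) % m) = ∑ j ∈ Finset.range m, f j := by
  induction i with
  | zero =>
    apply Finset.sum_congr rfl
    intro j hj
    rw [Nat.zero_add, Nat.mod_eq_of_lt (Finset.mem_range.mp hj)]
  | succ i ih =>
    have h1 := Finset.sum_range_succ (fun j => f ((i + j) % m)) m
    have h2 := Finset.sum_range_succ' (fun j => f ((i + j) % m)) m
    have h3 : ∑ j ∈ Finset.range m, f ((i + 1 + j) % m)
        = ∑ j ∈ Finset.range m, f ((i + (j + 1)) % m) := by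
      apply Finset.sum_congr rfl
      intro j _
      congr 2
      omega
    simp only [Nat.add_mod_right, Nat.add_zero] at h1 h2
    linarith

/-- Tightness of the variable-threshold pigeonring principle: if the boxes range over real
intervals `[u i, v i]` with `∑ u ≤ n ≤ ∑ v`, then for any threshold sequence `T` with
`∑ T < n` there is an admissible box sequence `B` with `∑ B ≤ n` such that no chain starting
anywhere has all prefixes within the variable-threshold bound. -/
theorem pigeonring_variable_threshold_tight (m : ℕ) (hm : 1 ≤ m) (u v t : ℕ → ℝ) (n : ℝ)
    (huv : ∀ i < m, u i ≤ v i)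
    (hu : ∑ i ∈ Finset.range m, u i ≤ n)
    (hv : n ≤ ∑ i ∈ Finset.range m, v i)
    (ht : ∑ i ∈ Finset.range m, t i < n) :
    ∃ b : ℕ → ℝ, (∀ i < m, u i ≤ b i ∧ b i ≤ v i) ∧
      (∑ i ∈ Finset.range m, b i ≤ n) ∧
      ∀ i < m, ∃ l', 1 ≤ l' ∧ l' ≤ m ∧
        ∑ j ∈ Finset.range l', t ((i + j) % m) < ∑ j ∈ Finset.range l', b ((i + j) % m) := by
  have key : ∃ θ : ℝ, 0 ≤ θ ∧ θ ≤ 1 ∧ ∑ i ∈ Finset.range m, u i +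
      θ * (∑ i ∈ Finset.range m, v i - ∑ i ∈ Finset.range m, u i) = n := by
    generalize ∑ i ∈ Finset.range m, u i = U at *
    generalize ∑ i ∈ Finset.range m, v i = V at *
    rcases (hu.trans hv).eq_or_lt with h | h
    · exact ⟨0, le_rfl, zero_le_one, by linarith⟩
    · have hp : 0 < V - U := by linarith
      refine ⟨(n - U) / (V - U), div_nonneg (by linarith) hp.le, ?_, ?_⟩
      · rw [div_le_one hp]
        linarith
      · rw [div_mul_cancel₀ _ hp.ne']
        ring
  obtain ⟨θ, h0, h1, hθ⟩ := key
  have hsum : ∑ i ∈ Finset.range m, (u i + θ * (v i - u i)) = n := by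
    rw [Finset.sum_add_distrib, ← Finset.mul_sum, Finset.sum_sub_distrib, hθ]
  refine ⟨fun i => u i + θ * (v i - u i), ?_, hsum.le, ?_⟩
  · intro i hi
    have := huv i hi
    constructor <;> dsimp only <;> nlinarith
  · intro i _
    refine ⟨m, hm, le_rfl, ?_⟩
    rw [ring_rotate_sum m t i, ring_rotate_sum m (fun i => u i + θ * (v i - u i)) i, hsum]
    exact ht
end

section
/- Let m ≥ 1, let u_0 ≤ v_0, …, u_{m−1} ≤ v_{m−1} be integers with Σ_{i=0}^{m−1} u_i ≤ n ≤ Σ_{i=0}^{m−1} v_i for an integer n, and let T = (t_0, …, t_{m−1}) be integers with t_0 + … + t_{m−1} < n − m + 1. Then there exists a sequence of integers B = (b_0, …, b_{m−1}) with u_i ≤ b_i ≤ v_i for every i and b_0 + … + b_{m−1} ≤ n, such that for every index i ∈ {0, …, m−1} there exists l' with 1 ≤ l' ≤ m for which Σ_{j=0}^{l'−1} b_{(i+j) mod m} > (l' − 1) + Σ_{j=0}^{l'−1} t_{(i+j) mod m}. -/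
theorem exists_box_sum (m : ℕ) (u v : ℕ → ℤ) : ∀ n : ℤ, (∀ i < m, u i ≤ v i) →
    ∑ i ∈ Finset.range m, u i ≤ n → n ≤ ∑ i ∈ Finset.range m, v i →
    ∃ b : ℕ → ℤ, (∀ i < m, u i ≤ b i ∧ b i ≤ v i) ∧ ∑ i ∈ Finset.range m, b i = n := by
  induction m with
  | zero =>
    intro n _ h1 h2
    simp at h1 h2
    exact ⟨u, by simp, by simp; omega⟩
  | succ k ih =>
    intro n h h1 h2
    rw [Finset.sum_range_succ] at h1 h2
    have hk := h k (by omega)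
    have hs : ∑ i ∈ Finset.range k, u i ≤ ∑ i ∈ Finset.range k, v i :=
      Finset.sum_le_sum fun i hi => h i (by have := Finset.mem_range.mp hi; omega)
    -- the last box takes as much as possible
    obtain ⟨x, hx1, hx2, hx3, hx4⟩ : ∃ x, u k ≤ x ∧ x ≤ v k ∧
        ∑ i ∈ Finset.range k, u i ≤ n - x ∧ n - x ≤ ∑ i ∈ Finset.range k, v i :=
      ⟨min (v k) (n - ∑ i ∈ Finset.range k, u i), by omega, by omega, by omega, by omega⟩
    obtain ⟨b, hb, hbs⟩ := ih (n - x) (fun i hi => h i (by omega)) hx3 hx4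
    refine ⟨fun i => if i = k then x else b i, ?_, ?_⟩
    · intro i hi
      by_cases hik : i = k
      · subst hik; simp [hx1, hx2]
      · simpa [hik] using hb i (by omega)
    · rw [Finset.sum_range_succ]
      have : ∑ i ∈ Finset.range k, (if i = k then x else b i) = ∑ i ∈ Finset.range k, b i :=
        Finset.sum_congr rfl fun i hi => by
          have := Finset.mem_range.mp hi
          rw [if_neg (by omega)]
      simp only [this, hbs, if_true]
      omega

theorem ring_sum_eq (m : ℕ) (f : ℕ → ℤ) (i : ℕ) :
    ∑ j ∈ Finset.range m, f ((i + j) % m) = ∑ j ∈ Finset.range m, f j := by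
  induction i with
  | zero =>
    refine Finset.sum_congr rfl fun j hj => ?_
    rw [Nat.zero_add, Nat.mod_eq_of_lt (Finset.mem_range.mp hj)]
  | succ i ih =>
    rw [← ih]
    have h1 := Finset.sum_range_succ (fun j => f ((i + j) % m)) m
    have h2 := Finset.sum_range_succ' (fun j => f ((i + j) % m)) m
    simp only [Nat.add_mod_right, Nat.add_zero] at h1 h2
    have h3 : ∑ j ∈ Finset.range m, f ((i + 1 + j) % m)
        = ∑ j ∈ Finset.range m, f ((i + (j + 1)) % m) :=
      Finset.sum_congr rfl fun j _ => by rw [show i + 1 + j = i + (j + 1) by omega]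
    linarith

/-- Tightness of the integer-reduction pigeonring principle: if the (integer) boxes range over
integer intervals `[u i, v i]` with `∑ u ≤ n ≤ ∑ v`, then for any integer threshold sequence
`T` with `∑ T < n - m + 1` there is an admissible box sequence `B` with `∑ B ≤ n` such that no
chain starting anywhere has all prefixes within the integer-reduction bound. -/
theorem pigeonring_integer_reduction_tight (m : ℕ) (hm : 1 ≤ m) (u v t : ℕ → ℤ) (n : ℤ)
    (huv : ∀ i < m, u i ≤ v i)
    (hu : ∑ i ∈ Finset.range m, u i ≤ n)
    (hv : n ≤ ∑ i ∈ Finset.range m, v i)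
    (ht : ∑ i ∈ Finset.range m, t i < n - m + 1) :
    ∃ b : ℕ → ℤ, (∀ i < m, u i ≤ b i ∧ b i ≤ v i) ∧
      (∑ i ∈ Finset.range m, b i ≤ n) ∧
      ∀ i < m, ∃ l', 1 ≤ l' ∧ l' ≤ m ∧
        ((l' : ℤ) - 1) + ∑ j ∈ Finset.range l', t ((i + j) % m) <
          ∑ j ∈ Finset.range l', b ((i + j) % m) := by
  obtain ⟨b, hb, hbs⟩ := exists_box_sum m u v n huv hu hv
  refine ⟨b, hb, hbs.le, fun i _ => ⟨m, hm, le_rfl, ?_⟩⟩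
  rw [ring_sum_eq, ring_sum_eq, hbs]
  linarith
end

section
/- A filtering instance is tight if and only if the following two conditions hold: (1) for all x, q ∈ O, S(x,q) ≤ D(f(x,q)); and (2) there do not exist x₁, q₁, x₂, q₂ ∈ O such that f(x₁,q₁) < f(x₂,q₂) and D(f(x₁,q₁)) ≥ S(x₂,q₂). -/
/-- Tightness characterization of a filtering instance: it is tight (for every threshold `τ`
in the range of `f`, `f x q ≤ τ` iff `S x q ≤ D τ`) iff (1) `S x q ≤ D (f x q)` for all
`x, q`, and (2) there are no `x₁ q₁ x₂ q₂` with `f x₁ q₁ < f x₂ q₂` and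
`D (f x₁ q₁) ≥ S x₂ q₂`. -/
theorem filtering_tight_iff {O : Type*} [Nonempty O]
    (f S : O → O → ℝ) (D : ℝ → ℝ) :
    (∀ x q : O, ∀ τ : ℝ, (∃ a b : O, f a b = τ) → (f x q ≤ τ ↔ S x q ≤ D τ)) ↔
      ((∀ x q : O, S x q ≤ D (f x q)) ∧
        ¬ ∃ x₁ q₁ x₂ q₂ : O, f x₁ q₁ < f x₂ q₂ ∧ D (f x₁ q₁) ≥ S x₂ q₂) := by
  constructor
  · intro h
    refine ⟨fun x q => (h x q _ ⟨x, q, rfl⟩).1 le_rfl, ?_⟩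
    rintro ⟨x₁, q₁, x₂, q₂, hlt, hge⟩
    exact absurd ((h x₂ q₂ _ ⟨x₁, q₁, rfl⟩).2 hge) (not_le.2 hlt)
  · rintro ⟨h1, h2⟩ x q τ ⟨a, b, rfl⟩
    constructor
    · intro hle
      rcases hle.lt_or_eq with hlt | heq
      · have h3 : D (f x q) < S a b := by
          by_contra hc
          exact h2 ⟨x, q, a, b, hlt, not_lt.1 hc⟩
        exact (h1 x q).trans (h3.le.trans (h1 a b))
      · rw [← heq]
        exact h1 x q
    · intro hS
      by_contra hc
      exact h2 ⟨a, b, x, q, not_le.1 hc, hS⟩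
end

section
/- Let b_0, …, b_{m−1} be m real numbers (m ≥ 1) placed in a ring, n a real number, i an index, and l' with 1 ≤ l' ≤ m. Suppose the chain c_i^{l'} fails the prefix-viable check exactly at length l': for every k with 1 ≤ k ≤ l'−1, Σ_{j=0}^{k−1} b_{(i+j) mod m} ≤ k·n/m, but Σ_{j=0}^{l'−1} b_{(i+j) mod m} > l'·n/m. Then for every s with 1 ≤ s ≤ l'−1, the chain of length l'−s starting at position i+s is not viable: Σ_{j=0}^{l'−s−1} b_{(i+s+j) mod m} > (l'−s)·n/m; consequently no chain starting from any position in {i, i+1, …, i+l'−1} of length at least reaching position i+l'−1 is prefix-viable. -/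
/-- Skipping optimization: if the chain starting at `i` fails the prefix-viable check exactly
at length `l'` (every proper prefix is viable but the length-`l'` prefix is not), then for
every `s ∈ [1, l' - 1]` the chain of length `l' - s` starting at `i + s` is not viable;
consequently, no chain starting at a position `i + s` with `s ≤ l' - 1`, long enough to reach
position `i + l' - 1`, is prefix-viable. -/
theorem pigeonring_skipping (m : ℕ) (hm : 1 ≤ m) (b : ℕ → ℝ) (n : ℝ)
    (i l' : ℕ) (hl'1 : 1 ≤ l') (hl'm : l' ≤ m)
    (hpre : ∀ k, 1 ≤ k → k ≤ l' - 1 →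
      ∑ j ∈ Finset.range k, b ((i + j) % m) ≤ (k : ℝ) * n / m)
    (hfail : (l' : ℝ) * n / m < ∑ j ∈ Finset.range l', b ((i + j) % m)) :
    (∀ s, 1 ≤ s → s ≤ l' - 1 →
      ((l' - s : ℕ) : ℝ) * n / m < ∑ j ∈ Finset.range (l' - s), b ((i + s + j) % m)) ∧
    (∀ s L, s ≤ l' - 1 → l' ≤ s + L →
      ¬ (∀ k, 1 ≤ k → k ≤ L →
        ∑ j ∈ Finset.range k, b ((i + s + j) % m) ≤ (k : ℝ) * n / m)) := by
  have key : ∀ s, 1 ≤ s → s ≤ l' - 1 →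
      ((l' - s : ℕ) : ℝ) * n / m < ∑ j ∈ Finset.range (l' - s), b ((i + s + j) % m) := by
    intro s hs1 hs
    obtain ⟨d, rfl⟩ : ∃ d, l' = s + d := ⟨l' - s, by omega⟩
    have h1 := hpre s hs1 hs
    rw [Finset.sum_range_add] at hfail
    simp only [← add_assoc] at hfail
    rw [Nat.add_sub_cancel_left]
    have h2 : ((s + d : ℕ) : ℝ) * n / m = (s : ℝ) * n / m + (d : ℝ) * n / m := by
      push_cast
      ring
    linarith
  refine ⟨key, ?_⟩
  intro s L hs hL h
  rcases Nat.eq_zero_or_pos s with rfl | hs0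
  · have h1 := h l' hl'1 (by omega)
    simp only [add_zero] at h1
    linarith
  · have h1 := h (l' - s) (by omega) (by omega)
    have h2 := key s hs0 hs
    linarith
end

section
/- Let b : ℝ → ℝ be a periodic function with period m (i.e., b(x + m) = b(x) for all x ∈ ℝ), where m is a positive real number, and suppose b is integrable on every bounded interval. Let u and n be real numbers. If ∫_u^{u+m} b(x) dx ≤ n, then there exists x₁ ∈ [u, u+m] such that for all x₂ ∈ [x₁, x₁+m], ∫_{x₁}^{x₂} b(x) dx ≤ (x₂ − x₁)·n/m. -/
open MeasureTheory intervalIntegral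

/-- Integral (continuous) form of the pigeonring principle: if `b` is periodic with period
`m > 0`, integrable on every bounded interval, and `∫_u^{u+m} b ≤ n`, then there exists
`x₁ ∈ [u, u + m]` such that for all `x₂ ∈ [x₁, x₁ + m]`,
`∫_{x₁}^{x₂} b ≤ (x₂ - x₁) * n / m`. -/
theorem pigeonring_integral (b : ℝ → ℝ) (u n m : ℝ) (hm : 0 < m)
    (hper : ∀ x : ℝ, b (x + m) = b x)
    (hint : ∀ a c : ℝ, IntervalIntegrable b volume a c)
    (h : (∫ x in u..(u + m), b x) ≤ n) :
    ∃ x₁ ∈ Set.Icc u (u + m), ∀ x₂ ∈ Set.Icc x₁ (x₁ + m),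
      (∫ x in x₁..x₂, b x) ≤ (x₂ - x₁) * n / m := by
  have hc : Continuous (fun x : ℝ => (∫ t in u..x, b t) - x * n / m) :=
    (intervalIntegral.continuous_primitive hint u).sub (by fun_prop)
  obtain ⟨x₁, hx₁, hmax⟩ := (isCompact_Icc (a := u) (b := u + m)).exists_isMaxOn
    ⟨u, by constructor <;> linarith⟩ hc.continuousOn
  have hmax' : ∀ y ∈ Set.Icc u (u + m),
      (∫ t in u..y, b t) - y * n / m ≤ (∫ t in u..x₁, b t) - x₁ * n / m :=
    fun y hy => hmax hy
  refine ⟨x₁, hx₁, fun x₂ hx₂ => ?_⟩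
  obtain ⟨h1, h2⟩ := hx₁
  obtain ⟨h3, h4⟩ := hx₂
  have e1 := integral_add_adjacent_intervals (hint u x₁) (hint x₁ x₂)
  have e2 : (x₂ - x₁) * n / m = x₂ * n / m - x₁ * n / m := by ring
  rw [e2]
  rcases le_total x₂ (u + m) with hle | hge
  · have := hmax' x₂ ⟨by linarith, hle⟩
    linarith
  · have h5 := hmax' (x₂ - m) ⟨by linarith, by linarith⟩
    have hp : Function.Periodic b m := hper
    have e3 := hp.intervalIntegral_add_eq (x₂ - m) u
    rw [sub_add_cancel] at e3
    have e4 := integral_add_adjacent_intervals (hint u (x₂ - m)) (hint (x₂ - m) x₂)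
    have e5 : (x₂ - m) * n / m = x₂ * n / m - n := by field_simp
    linarith
end
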